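/- (Merging operators implement the joint logical operator.) In the merging setup, the product of all merging operators telescopes: ∏_{i=1}^N G^M_i = P_L^A * P_L^B; i.e., the product of the merging operators acts as the joint logical operator P_L^A ⊗ P_L^B on the data qubits and as the identity on all ancillas, so that measuring all G^M_i determines the eigenvalue of P_L^A ⊗ P_L^B. -/

import Mathlib

/-!
Each ancilla `c_k` with `0 < k < N` enters exactly two of the merging operators, the `k`-th and the
`(k+1)`-st, each time through a factor `Z_{c_k}`. Operators on distinct qubits commute
(`actQ_commute`) and `Z ^ 2 = 1`, so the two factors meet and cancel. The partial product of the
first `n` merging operators is therefore `(∏ P^A_i) * (∏ P^B_i) * Z_{c_n}`, and the convention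
`Z_{c_N} = 1` removes the remaining factor at `n = N`. This telescoping is carried out in an
arbitrary monoid in `prod_ofFn_telescope`. The factors `P^A_i` only have to commute with the
`P^B_j` and the `Z_{c_k}`, since their order among themselves is never changed.
-/


open Matrix Complex
open scoped Classical

noncomputable section

/-- The Pauli matrix `X`. -/
def PX : Matrix (Fin 2) (Fin 2) ℂ := !![0, 1; 1, 0]

/-- The Pauli matrix `Y`. -/
def PY : Matrix (Fin 2) (Fin 2) ℂ := !![0, -Complex.I; Complex.I, 0]

/-- The Pauli matrix `Z`. -/
def PZ : Matrix (Fin 2) (Fin 2) ℂ := !![1, 0; 0, -1]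

/-- The single-qubit operator `M` acting on the tensor factor `q` and as the identity on
all other factors. -/
def actQ {Q : Type*} (q : Q) (M : Matrix (Fin 2) (Fin 2) ℂ) :
    Matrix (Q → Fin 2) (Q → Fin 2) ℂ :=
  fun v w => M (v q) (w q) * (if ∀ k, k ≠ q → v k = w k then 1 else 0)

/-- The Pauli `Z` operator on the `k`-th ancilla `c_k` (with 1-based index `k = 1, ..., N-1`),
with the conventions `Z_{c_0} = 1` and `Z_{c_N} = 1`. -/
def ancZ (Q : Type*) [Fintype Q] [DecidableEq Q] (N : ℕ) (c : Fin (N - 1) → Q) (k : ℕ) :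
    Matrix (Q → Fin 2) (Q → Fin 2) ℂ :=
  if h : 0 < k ∧ k < N then actQ (c ⟨k - 1, by omega⟩) PZ else 1

/-- The merging operator `G^M_i = P^A_i * P^B_i * Z_{c_i} * Z_{c_{i-1}}` (1-based index
`i = i₀ + 1` for `i₀ : Fin N`). -/
def mergeOp (Q : Type*) [Fintype Q] [DecidableEq Q] (N : ℕ) (qA qB : Fin N → Q)
    (c : Fin (N - 1) → Q) (PA PB : Fin N → Matrix (Fin 2) (Fin 2) ℂ) (i : Fin N) :
    Matrix (Q → Fin 2) (Q → Fin 2) ℂ :=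
  actQ (qA i) (PA i) * actQ (qB i) (PB i) * ancZ Q N c (i.val + 1) * ancZ Q N c i.val

/-- Left multiplication by a single-qubit operator only sums over the value at that qubit. -/
lemma actQ_mul_apply {Q : Type*} [Fintype Q] [DecidableEq Q] (q : Q)
    (M : Matrix (Fin 2) (Fin 2) ℂ) (A : Matrix (Q → Fin 2) (Q → Fin 2) ℂ) (v w : Q → Fin 2) :
    (actQ q M * A) v w = ∑ a, M (v q) a * A (Function.update v q a) w := by
  rw [Matrix.mul_apply]
  symm
  refine Finset.sum_of_injOn (fun a => Function.update v q a)
    (Function.update_injective v q).injOn (by simp) ?_ ?_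
  · intro u _ hu
    have h : ¬ ∀ k, k ≠ q → v k = u k := by
      intro h
      refine hu ⟨u q, by simp, ?_⟩
      funext k
      rcases eq_or_ne k q with rfl | hk
      · simp
      · simp [hk, h k hk]
    simp only [actQ, if_neg h, mul_zero, zero_mul]
  · intro a _
    have h : ∀ k, k ≠ q → v k = Function.update v q a k := fun k hk => by simp [hk]
    simp only [actQ, if_pos h, mul_one, Function.update_self]

lemma actQ_mul_actQ_apply {Q : Type*} [Fintype Q] [DecidableEq Q] {p q : Q} (hpq : p ≠ q)
    (M M' : Matrix (Fin 2) (Fin 2) ℂ) (v w : Q → Fin 2) :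
    (actQ p M * actQ q M') v w =
      M (v p) (w p) * M' (v q) (w q) * (if ∀ k, k ≠ p → k ≠ q → v k = w k then 1 else 0) := by
  rw [actQ_mul_apply, Finset.sum_eq_single (w p)]
  · have h : (∀ k, k ≠ q → Function.update v p (w p) k = w k) ↔
        ∀ k, k ≠ p → k ≠ q → v k = w k := by
      refine forall_congr' fun k => ?_
      rcases eq_or_ne k p with rfl | hk
      · simp
      · simp [hk]
    simp only [actQ, h, Function.update_of_ne hpq.symm, mul_assoc]
  · intro a _ ha
    have h : ¬ ∀ k, k ≠ q → Function.update v p a k = w k := fun h =>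
      ha (by simpa using h p hpq)
    simp only [actQ, if_neg h, mul_zero]
  · simp

lemma actQ_commute {Q : Type*} [Fintype Q] [DecidableEq Q] {p q : Q} (hpq : p ≠ q)
    (M M' : Matrix (Fin 2) (Fin 2) ℂ) : Commute (actQ p M) (actQ q M') := by
  ext v w
  rw [actQ_mul_actQ_apply hpq, actQ_mul_actQ_apply hpq.symm, mul_comm (M (v p) (w p))]
  have h : (∀ k, k ≠ p → k ≠ q → v k = w k) ↔ ∀ k, k ≠ q → k ≠ p → v k = w k :=
    forall_congr' fun _ => forall_comm
  simp only [h]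

lemma actQ_mul_same {Q : Type*} [Fintype Q] [DecidableEq Q] (q : Q)
    (M M' : Matrix (Fin 2) (Fin 2) ℂ) : actQ q M * actQ q M' = actQ q (M * M') := by
  ext v w
  have h (a : Fin 2) : (∀ k, k ≠ q → Function.update v q a k = w k) ↔
      ∀ k, k ≠ q → v k = w k :=
    forall₂_congr fun k hk => by simp [hk]
  rw [actQ_mul_apply]
  simp only [actQ, h, Function.update_self, Matrix.mul_apply, Finset.sum_mul, mul_assoc]
  -- The two sides differ only in the decidability instance of the indicator.
  congr!

lemma actQ_one {Q : Type*} [Fintype Q] [DecidableEq Q] (q : Q) :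
    actQ q (1 : Matrix (Fin 2) (Fin 2) ℂ) = 1 := by
  ext v w
  simp only [actQ, Matrix.one_apply, ← ite_and, mul_ite, mul_one, mul_zero]
  have h : ((∀ k, k ≠ q → v k = w k) ∧ v q = w q) ↔ v = w := by
    refine ⟨fun h => funext fun k => ?_, fun h => by simp [h]⟩
    rcases eq_or_ne k q with rfl | hk
    · exact h.2
    · exact h.1 k hk
  simp only [h]

lemma PZ_mul_PZ : PZ * PZ = 1 := by
  ext i j
  fin_cases i <;> fin_cases j <;> simp [PZ]

lemma ancZ_mul_self {Q : Type*} [Fintype Q] [DecidableEq Q] (N : ℕ) (c : Fin (N - 1) → Q)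
    (k : ℕ) : ancZ Q N c k * ancZ Q N c k = 1 := by
  unfold ancZ
  split_ifs
  · rw [actQ_mul_same, PZ_mul_PZ, actQ_one]
  · exact one_mul 1

lemma actQ_commute_ancZ {Q : Type*} [Fintype Q] [DecidableEq Q] {N : ℕ} {c : Fin (N - 1) → Q}
    {q : Q} (hq : ∀ k, q ≠ c k) (M : Matrix (Fin 2) (Fin 2) ℂ) (k : ℕ) :
    Commute (actQ q M) (ancZ Q N c k) := by
  unfold ancZ
  split_ifs
  · exact actQ_commute (hq _) _ _
  · exact Commute.one_right _

/-- Telescoping in a monoid: if the `z k` are commuting involutions that commute with all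
`a i` and `b i`, and every `a i` commutes with every `b j`, then all factors `z k` with
`0 < k < n` cancel. -/
lemma prod_ofFn_telescope {M : Type*} [Monoid M] (z : ℕ → M) (hz : ∀ k, z k * z k = 1)
    (hz0 : z 0 = 1) (hzz : ∀ k l, Commute (z k) (z l)) (n : ℕ) (a b : Fin n → M)
    (hab : ∀ i j, Commute (a i) (b j)) (haz : ∀ i k, Commute (a i) (z k))
    (hbz : ∀ i k, Commute (b i) (z k)) :
    (List.ofFn fun i => a i * b i * z (i.val + 1) * z i.val).prod =
      (List.ofFn a).prod * (List.ofFn b).prod * z n := by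
  induction n with
  | zero => simp [hz0]
  | succ n ih =>
    rw [List.ofFn_succ', List.ofFn_succ' (f := a), List.ofFn_succ' (f := b)]
    simp only [List.concat_eq_append, List.prod_append, List.prod_singleton, Fin.val_castSucc,
      Fin.val_last]
    rw [ih (fun i => a i.castSucc) (fun i => b i.castSucc) (fun i j => hab _ _)
      (fun i k => haz _ _) (fun i k => hbz _ _)]
    set A := (List.ofFn fun i : Fin n => a i.castSucc).prod
    set B := (List.ofFn fun i : Fin n => b i.castSucc).prod
    set x := a (Fin.last n)
    set y := b (Fin.last n)
    have hxB : Commute x B := by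
      refine Commute.list_prod_right _ _ fun t ht => ?_
      obtain ⟨i, rfl⟩ := (List.mem_ofFn' _ _).1 ht
      exact hab _ _
    have hxyz : Commute (z n) (x * y * z (n + 1)) :=
      ((haz _ n).symm.mul_right (hbz _ n).symm).mul_right (hzz _ _)
    calc A * B * z n * (x * y * z (n + 1) * z n)
        = A * B * (z n * (x * y * z (n + 1))) * z n := by simp only [mul_assoc]
      _ = A * B * (x * y * z (n + 1)) * (z n * z n) := by rw [hxyz.eq]; simp only [mul_assoc]
      _ = A * (B * x) * y * z (n + 1) := by rw [hz, mul_one]; simp only [mul_assoc]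
      _ = A * x * (B * y) * z (n + 1) := by rw [← hxB.eq]; simp only [mul_assoc]

/-- The product of all merging operators telescopes to the joint logical operator
`P_L^A * P_L^B`, acting as the identity on all ancillas. -/
theorem mergeOp_prod_eq_joint_logical (Q : Type*) [Fintype Q] [DecidableEq Q]
    (N : ℕ) (hN : 1 ≤ N) (qA qB : Fin N → Q) (c : Fin (N - 1) → Q)
    (hqA : Function.Injective qA) (hqB : Function.Injective qB)
    (hc : Function.Injective c)
    (hAB : ∀ i j, qA i ≠ qB j) (hAc : ∀ i k, qA i ≠ c k) (hBc : ∀ i k, qB i ≠ c k)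
    (PA PB : Fin N → Matrix (Fin 2) (Fin 2) ℂ)
    (hPA : ∀ i, PA i = PX ∨ PA i = PY ∨ PA i = PZ)
    (hPB : ∀ i, PB i = PX ∨ PB i = PY ∨ PB i = PZ) :
    (List.ofFn (mergeOp Q N qA qB c PA PB)).prod =
      (List.ofFn fun i => actQ (qA i) (PA i)).prod *
        (List.ofFn fun i => actQ (qB i) (PB i)).prod := by
  have hzz (k l : ℕ) : Commute (ancZ Q N c k) (ancZ Q N c l) := by
    by_cases hl : 0 < l ∧ l < N
    · rcases eq_or_ne k l with rfl | hkl
      · exact Commute.refl _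
      by_cases hk : 0 < k ∧ k < N
      · simp only [ancZ, dif_pos hk, dif_pos hl]
        refine actQ_commute (fun h => hkl ?_) _ _
        have := congrArg Fin.val (hc h)
        simp only at this
        omega
      · simp only [ancZ, dif_neg hk]
        exact Commute.one_left _
    · simp only [ancZ, dif_neg hl]
      exact Commute.one_right _
  have h := prod_ofFn_telescope (ancZ Q N c) (ancZ_mul_self N c) (by simp [ancZ]) hzz N
    (fun i => actQ (qA i) (PA i)) (fun i => actQ (qB i) (PB i))
    (fun i j => actQ_commute (hAB i j) _ _) (fun i k => actQ_commute_ancZ (hAc i) _ k)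
    (fun i k => actQ_commute_ancZ (hBc i) _ k)
  have hzN : ancZ Q N c N = 1 := by simp [ancZ]
  rw [hzN, mul_one] at h
  exact h
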